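/- arXiv:2006.13132 — 4 statements merged into one kernel-verified Lean document; each statement's English description precedes it below -/
import Mathlib

section
/- Let X be a metric space with its Borel σ-algebra, μ a probability measure on X, and f, g : X → ℝ measurable and integrable functions. Let α > 0 and 0 < γ ≤ 1. Assume (i) min(f(x), g(x)) ≤ 0 for μ-almost every x (μ is supported on the region H_f^- ∪ H_g^- of negatively predicted individuals), and (ii) for all x, dist(x, {y : f(y) > 0} ∩ {y : g(y) > 0}) ≤ α · (max(0, max(−f(x), −g(x))))^γ. Then ∫ dist(x, {f > 0} ∩ {g > 0}) dμ(x) ≤ (α / 2^γ) · ( ∫ (−f(x) − g(x) + |f(x) − g(x)|) dμ(x) )^γ. -/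
open MeasureTheory Metric

/-- Key integrated bound in the proof of Proposition 2: under the Pang-type residual bound
(Assumption 1) and assuming `μ` is supported on `H_f^- ∪ H_g^-` (i.e. `min (f x) (g x) ≤ 0`
a.e.), the expected cost of flipping both classifiers satisfies
`∫ dist(x, {f > 0} ∩ {g > 0}) dμ ≤ (α / 2^γ) * (∫ (-f - g + |f - g|) dμ)^γ`. -/
theorem integral_infDist_le_of_residual_bound {X : Type*} [MetricSpace X] [MeasurableSpace X]
    [BorelSpace X] (μ : Measure X) [IsProbabilityMeasure μ]
    (f g : X → ℝ) (hf : Measurable f) (hg : Measurable g)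
    (hfi : Integrable f μ) (hgi : Integrable g μ)
    (α γ : ℝ) (hα : 0 < α) (hγ0 : 0 < γ) (hγ1 : γ ≤ 1)
    (hneg : ∀ᵐ x ∂μ, min (f x) (g x) ≤ 0)
    (hdist : ∀ x, infDist x ({y | 0 < f y} ∩ {y | 0 < g y}) ≤
      α * (max 0 (max (-f x) (-g x))) ^ γ) :
    ∫ x, infDist x ({y | 0 < f y} ∩ {y | 0 < g y}) ∂μ ≤
      (α / 2 ^ γ) * (∫ x, (-f x - g x + |f x - g x|) ∂μ) ^ γ := by
  set m : X → ℝ := fun x => max 0 (max (-f x) (-g x)) with hm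
  have hm0 : ∀ x, 0 ≤ m x := fun x => le_max_left _ _
  have hmm : Measurable m := measurable_const.max (hf.neg.max hg.neg)
  have hmi : Integrable m μ := (integrable_zero X ℝ μ).sup (hfi.neg.sup hgi.neg)
  have hpi : Integrable (fun x => m x ^ γ) μ := by
    refine Integrable.mono' ((integrable_const (1 : ℝ)).add hmi)
      (hmm.pow_const γ).aestronglyMeasurable (Filter.Eventually.of_forall fun x => ?_)
    rw [Real.norm_of_nonneg (Real.rpow_nonneg (hm0 x) γ)]
    show m x ^ γ ≤ 1 + m x
    rcases le_total (m x) 1 with h | h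
    · have := Real.rpow_le_one (hm0 x) h hγ0.le
      linarith [hm0 x]
    · have := Real.rpow_le_rpow_of_exponent_le h hγ1
      rw [Real.rpow_one] at this
      linarith
  have heq : ∫ x, (-f x - g x + |f x - g x|) ∂μ = 2 * ∫ x, m x ∂μ := by
    rw [← integral_const_mul]
    refine integral_congr_ae ?_
    filter_upwards [hneg] with x hx
    simp only [hm]
    rcases le_total (f x) (g x) with h | h
    · rw [min_eq_left h] at hx
      rw [abs_of_nonpos (by linarith), max_eq_left (by linarith : -g x ≤ -f x),
        max_eq_right (by linarith)]
      ring
    · rw [min_eq_right h] at hx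
      rw [abs_of_nonneg (by linarith), max_eq_right (by linarith : -f x ≤ -g x),
        max_eq_right (by linarith)]
      ring
  have hJ : ∫ x, m x ^ γ ∂μ ≤ (∫ x, m x ∂μ) ^ γ :=
    (Real.concaveOn_rpow hγ0.le hγ1).le_map_integral
      (Real.continuous_rpow_const hγ0.le).continuousOn isClosed_Ici
      (Filter.Eventually.of_forall hm0) hmi hpi
  have h2 : (0 : ℝ) < 2 ^ γ := Real.rpow_pos_of_pos two_pos γ
  rw [heq, Real.mul_rpow two_pos.le (integral_nonneg hm0)]
  calc _ ≤ ∫ x, α * m x ^ γ ∂μ :=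
        integral_mono_of_nonneg (Filter.Eventually.of_forall fun x => infDist_nonneg)
          (hpi.const_mul α) (Filter.Eventually.of_forall hdist)
    _ = α * ∫ x, m x ^ γ ∂μ := integral_const_mul _ _
    _ ≤ α * (∫ x, m x ∂μ) ^ γ := mul_le_mul_of_nonneg_left hJ hα.le
    _ = _ := by field_simp
end

section
/- Let μ be a probability measure on a measurable space X, D⁺ ⊆ X a measurable set (the individuals whose true label is +1, with complement D⁻), and f : X → ℝ a measurable function with |f(x)| ≤ M for all x, where M ≥ 0. Then −∫ f dμ ≤ 2M · ( μ(D⁺ ∩ {x : f(x) ≤ 0}) + μ(D⁻ ∩ {x : f(x) > 0}) ) + ∫_{D⁺} f dμ − ∫_{D⁻} f dμ. -/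
open MeasureTheory

/-- The rewriting inequality (equations (note1)–(note2) in the proof of Proposition 2): for a
probability measure `μ`, a measurable set `D⁺`, and a measurable `f` with `|f| ≤ M`,
`-∫ f dμ ≤ 2M·(μ(D⁺ ∩ {f ≤ 0}) + μ(D⁻ ∩ {f > 0})) + ∫_{D⁺} f dμ - ∫_{D⁻} f dμ`. -/
theorem neg_integral_le_risk_bound {X : Type*} [MeasurableSpace X] (μ : Measure X)
    [IsProbabilityMeasure μ] (Dp : Set X) (hDp : MeasurableSet Dp)
    (f : X → ℝ) (hf : Measurable f) (M : ℝ) (hM : 0 ≤ M) (hbound : ∀ x, |f x| ≤ M) :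
    -∫ x, f x ∂μ ≤
      2 * M * ((μ (Dp ∩ {x | f x ≤ 0})).toReal + (μ (Dpᶜ ∩ {x | 0 < f x})).toReal)
        + ∫ x in Dp, f x ∂μ - ∫ x in Dpᶜ, f x ∂μ := by
  have hfi : Integrable f μ :=
    Integrable.of_bound hf.aestronglyMeasurable M (Filter.Eventually.of_forall hbound)
  have hs : MeasurableSet {x | f x ≤ 0} := measurableSet_le hf measurable_const
  have hsplit := integral_add_compl hDp hfi
  have hA : ∫ x in Dp, {x | f x ≤ 0}.indicator (fun _ => -M) x ∂μ ≤ ∫ x in Dp, f x ∂μ := by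
    apply integral_mono
    · exact (integrable_const (-M)).indicator hs
    · exact hfi.integrableOn
    · intro x
      by_cases hx : f x ≤ 0
      · have := neg_le_of_abs_le (hbound x)
        simpa [Set.indicator, hx] using this
      · simpa [Set.indicator, hx] using (not_le.mp hx).le
  rw [setIntegral_indicator hs, setIntegral_const, smul_eq_mul, Measure.real] at hA
  have hb : 0 ≤ M * (μ (Dpᶜ ∩ {x | 0 < f x})).toReal := mul_nonneg hM ENNReal.toReal_nonneg
  linarith
end

section
/- Let X be a metric space with its Borel σ-algebra and μ a probability measure on X such that f(x) ≤ 0 for μ-almost every x (μ is the distribution over the negatively predicted region H_f^- = {f ≤ 0}). Let f : X → ℝ be measurable with |f(x)| ≤ c^max for all x, let α > 0, and assume dist(x, {y : f(y) > 0}) ≤ α · max(0, −f(x)) for μ-almost every x (Assumption 1 with γ = 1). Let D⁺ ⊆ X be measurable with 0 < μ(D⁺) < 1, write π = μ(D⁺), c_{D⁺} = (∫_{D⁺} f dμ)/μ(D⁺), c_{D⁻} = (∫_{(D⁺)ᶜ} f dμ)/μ((D⁺)ᶜ), and R = π · μ({f ≤ 0} | D⁺) + (1 − π) · μ({f > 0}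 | (D⁺)ᶜ) (conditional probabilities under μ). Then the expected cost of counterfactual recommendations satisfies ∫ dist(x, {f > 0}) dμ(x) ≤ α · ( π · c_{D⁺} − (1 − π) · c_{D⁻} + 2 · c^max · R ). -/
open MeasureTheory Metric

/-- Lemma 5 (Ustun et al., Theorem 3; the `γ = 1` expected-cost bound): if `μ` is supported on
`H_f^- = {f ≤ 0}`, `|f| ≤ c^max`, and `dist(x, {f > 0}) ≤ α·max 0 (-f x)` a.e., then
`∫ dist(x, {f > 0}) dμ ≤ α·(π·c_{D⁺} - (1 - π)·c_{D⁻} + 2·c^max·R)`. -/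
theorem expected_cost_bound_single_classifier {X : Type*} [MetricSpace X] [MeasurableSpace X]
    [BorelSpace X] (μ : Measure X) [IsProbabilityMeasure μ]
    (f : X → ℝ) (hf : Measurable f) (cmax : ℝ) (hbound : ∀ x, |f x| ≤ cmax)
    (α : ℝ) (hα : 0 < α)
    (hneg : ∀ᵐ x ∂μ, f x ≤ 0)
    (hdist : ∀ᵐ x ∂μ, infDist x {y | 0 < f y} ≤ α * max 0 (-f x))
    (Dp : Set X) (hDpm : MeasurableSet Dp) (hDp0 : 0 < μ Dp) (hDp1 : μ Dp < 1)
    (π cDp cDm R : ℝ)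
    (hπ : π = (μ Dp).toReal)
    (hcDp : cDp = (∫ x in Dp, f x ∂μ) / (μ Dp).toReal)
    (hcDm : cDm = (∫ x in Dpᶜ, f x ∂μ) / (μ Dpᶜ).toReal)
    (hR : R = π * ((μ ({x | f x ≤ 0} ∩ Dp)).toReal / (μ Dp).toReal)
      + (1 - π) * ((μ ({x | 0 < f x} ∩ Dpᶜ)).toReal / (μ Dpᶜ).toReal)) :
    ∫ x, infDist x {y | 0 < f y} ∂μ ≤
      α * (π * cDp - (1 - π) * cDm + 2 * cmax * R) := by
  have hcm : 0 < (μ Dpᶜ).toReal ∧ (μ Dpᶜ).toReal = 1 - (μ Dp).toReal := by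
    have h1 : (μ Dpᶜ).toReal = 1 - (μ Dp).toReal := by
      have := probReal_compl_eq_one_sub (μ := μ) hDpm
      simpa [Measure.real] using this
    have h2 : (μ Dp).toReal < 1 := by
      have := (ENNReal.toReal_lt_toReal (measure_ne_top μ Dp) ENNReal.one_ne_top).2 hDp1
      simpa using this
    exact ⟨by linarith, h1⟩
  obtain ⟨hcpos, hceq⟩ := hcm
  have hppos : 0 < (μ Dp).toReal := ENNReal.toReal_pos hDp0.ne' (measure_ne_top μ Dp)
  have hint : Integrable f μ :=
    Integrable.of_bound hf.aestronglyMeasurable cmax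
      (Filter.Eventually.of_forall fun x => by simpa [Real.norm_eq_abs] using hbound x)
  have hE1 : μ ({x | f x ≤ 0} ∩ Dp) = μ Dp := by
    apply measure_congr
    filter_upwards [hneg] with x hx
    apply propext
    exact ⟨fun h => h.2, fun h => ⟨hx, h⟩⟩
  have hE2 : μ ({x | 0 < f x} ∩ Dpᶜ) = 0 := by
    apply measure_mono_null Set.inter_subset_left
    have := ae_iff.1 hneg
    simpa using this
  have hRπ : R = (μ Dp).toReal := by
    rw [hR, hE1, hE2, hπ]
    simp [div_self hppos.ne']
  have hA : π * cDp = ∫ x in Dp, f x ∂μ := by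
    rw [hπ, hcDp]; field_simp
  have hB : (1 - π) * cDm = ∫ x in Dpᶜ, f x ∂μ := by
    rw [hπ, hcDm, ← hceq]; field_simp
  have hsplit := integral_add_compl hDpm hint
  have hlow : -(cmax * (μ Dp).toReal) ≤ ∫ x in Dp, f x ∂μ := by
    have h := norm_setIntegral_le_of_norm_le_const (μ := μ) (s := Dp) (f := f) (C := cmax)
      (measure_lt_top μ Dp) (fun x _ => by simpa [Real.norm_eq_abs] using hbound x)
    rw [Real.norm_eq_abs] at h
    exact (abs_le.1 h).1
  have hmain : ∫ x, infDist x {y | 0 < f y} ∂μ ≤ ∫ x, α * (-f x) ∂μ := by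
    apply integral_mono_of_nonneg
    · exact Filter.Eventually.of_forall fun x => infDist_nonneg
    · exact hint.neg.const_mul α
    · filter_upwards [hneg, hdist] with x h1 h2
      rwa [max_eq_right (by linarith)] at h2
  rw [integral_const_mul, integral_neg] at hmain
  refine hmain.trans (mul_le_mul_of_nonneg_left ?_ hα.le)
  rw [hA, hB, hRπ]
  linarith
end

section
/- Let X be a metric space with its Borel σ-algebra and μ a probability measure on X such that min(f(x), g(x)) ≤ 0 for μ-almost every x (μ is the distribution over H_f^- ∪ H_g^-). Let f, g : X → ℝ be measurable with |f(x)| ≤ c^max_f and |g(x)| ≤ c^max_g for all x, let D⁺ ⊆ X be measurable, and assume the sets {f ≤ 0}, {g ≤ 0}, {f ≤ 0} ∩ D⁺, {f ≤ 0} ∩ (D⁺)ᶜ, {g ≤ 0} ∩ D⁺, {g ≤ 0} ∩ (D⁺)ᶜ all have positive μ-measure. Let α > 0, 0 < γ ≤ 1, and assume Assumption 1: dist(x, {f > 0} ∩ {g > 0}) ≤ α · (max(0, max(−f(x), −g(x))))^γ for all x. Define π_f = μ(D⁺ | {f ≤ 0}), π_g = μ(D⁺ | {g ≤ 0}); c_{D⁺}(f)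 = (∫_{{f ≤ 0} ∩ D⁺} f dμ)/μ({f ≤ 0} ∩ D⁺) and c_{D⁻}(f) = (∫_{{f ≤ 0} ∩ (D⁺)ᶜ} f dμ)/μ({f ≤ 0} ∩ (D⁺)ᶜ), with c_{D⁺}(g), c_{D⁻}(g) defined analogously; R_f = π_f · μ({f ≤ 0} | {f ≤ 0} ∩ D⁺) + (1 − π_f) · μ({f > 0} | {f ≤ 0} ∩ (D⁺)ᶜ), with R_g analogous; and Δ(f, g) = ∫ |f(x) − g(x)| dμ(x). Then the expected cost of counterfactual explanations under classifier multiplicity satisfies ∫ dist(x, {f > 0} ∩ {g > 0}) dμ(x) ≤ α · 8^{1−γ} · [ 2·R_f·c^max_f + 2·R_g·c^max_g + π_f·c_{D⁺}(f) + π_g·c_{D⁺}(g) − (1 − π_f)·c_{D⁻}(f) − (1 − π_g)·c_{D⁻}(g) + Δ(f, g) ]^γ. -/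
open MeasureTheory Metric

lemma aux_bound {X : Type*} [MeasurableSpace X] (μ : Measure X) [IsProbabilityMeasure μ]
    (f : X → ℝ) (hf : Measurable f) (c : ℝ) (hbf : ∀ x, |f x| ≤ c)
    (Dp : Set X) (hDpm : MeasurableSet Dp)
    (h1 : 0 < μ {x | f x ≤ 0})
    (h3 : 0 < μ ({x | f x ≤ 0} ∩ Dp)) (h4 : 0 < μ ({x | f x ≤ 0} ∩ Dpᶜ))
    (πf cDpf cDmf Rf : ℝ)
    (hπf : πf = (μ (Dp ∩ {x | f x ≤ 0})).toReal / (μ {x | f x ≤ 0}).toReal)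
    (hcDpf : cDpf =
      (∫ x in {x | f x ≤ 0} ∩ Dp, f x ∂μ) / (μ ({x | f x ≤ 0} ∩ Dp)).toReal)
    (hcDmf : cDmf =
      (∫ x in {x | f x ≤ 0} ∩ Dpᶜ, f x ∂μ) / (μ ({x | f x ≤ 0} ∩ Dpᶜ)).toReal)
    (hRf : Rf = πf *
        ((μ ({x | f x ≤ 0} ∩ ({x | f x ≤ 0} ∩ Dp))).toReal / (μ ({x | f x ≤ 0} ∩ Dp)).toReal)
      + (1 - πf) *
        ((μ ({x | 0 < f x} ∩ ({x | f x ≤ 0} ∩ Dpᶜ))).toReal / (μ ({x | f x ≤ 0} ∩ Dpᶜ)).toReal)) :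
    ∫ x, max 0 (-f x) ∂μ ≤ 2 * Rf * c + πf * cDpf - (1 - πf) * cDmf := by
  have hfi : Integrable f μ := Integrable.of_bound hf.aestronglyMeasurable c
    (Filter.Eventually.of_forall fun x => by simpa using hbf x)
  have hS : MeasurableSet {x | f x ≤ 0} := hf measurableSet_Iic
  have e1 : {x | f x ≤ 0} ∩ ({x | f x ≤ 0} ∩ Dp) = {x | f x ≤ 0} ∩ Dp := by
    ext x; simp
  have e2 : {x | 0 < f x} ∩ ({x | f x ≤ 0} ∩ Dpᶜ) = ∅ := by
    ext x; simp; intro h h'; linarith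
  rw [e1, e2] at hRf
  rw [Set.inter_comm] at hπf
  have hIeq : ∫ x, max 0 (-f x) ∂μ = - ∫ x in {x | f x ≤ 0}, f x ∂μ := by
    rw [← integral_neg, ← integral_indicator hS]
    congr 1; ext x
    by_cases hx : f x ≤ 0
    · simp [Set.indicator, hx]
    · simp [Set.indicator, hx]; linarith
  have hadd := setIntegral_union (μ := μ) (f := f) (s := {x | f x ≤ 0} ∩ Dp)
    (t := {x | f x ≤ 0} ∩ Dpᶜ)
    (Set.disjoint_left.2 fun x hx hy => hy.2 hx.2) (hS.inter hDpm.compl)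
    hfi.integrableOn hfi.integrableOn
  rw [Set.inter_union_compl] at hadd
  have hmadd := measureReal_inter_add_sdiff (μ := μ) (s := {x | f x ≤ 0}) hDpm
  rw [Set.sdiff_eq] at hmadd
  have hp1 : (μ {x | f x ≤ 0}).toReal ≤ 1 := measureReal_le_one
  have hp := ENNReal.toReal_pos h1.ne' (measure_ne_top _ _)
  have ha := ENNReal.toReal_pos h3.ne' (measure_ne_top _ _)
  have hb := ENNReal.toReal_pos h4.ne' (measure_ne_top _ _)
  have hI1 : ∫ x in {x | f x ≤ 0} ∩ Dp, f x ∂μ ≤ 0 :=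
    setIntegral_nonpos (hS.inter hDpm) fun x hx => hx.1
  have hI2 : ∫ x in {x | f x ≤ 0} ∩ Dpᶜ, f x ∂μ ≤ 0 :=
    setIntegral_nonpos (hS.inter hDpm.compl) fun x hx => hx.1
  have hI1c := norm_setIntegral_le_of_norm_le_const (μ := μ) (s := {x | f x ≤ 0} ∩ Dp) (f := f)
    (C := c) (measure_lt_top _ _) (fun x _ => by simpa using hbf x)
  rw [Real.norm_eq_abs, abs_of_nonpos hI1] at hI1c
  simp only [Measure.real] at hmadd hI1c
  rw [hIeq, hadd]
  generalize (∫ x in {x | f x ≤ 0} ∩ Dp, f x ∂μ) = I1 at *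
  generalize (∫ x in {x | f x ≤ 0} ∩ Dpᶜ, f x ∂μ) = I2 at *
  generalize (μ ({x | f x ≤ 0} ∩ Dp)).toReal = a at *
  generalize (μ ({x | f x ≤ 0} ∩ Dpᶜ)).toReal = b at *
  generalize (μ {x | f x ≤ 0}).toReal = p at *
  have hR : Rf = a / p := by rw [hRf, hπf]; simp [ha.ne']
  have hq : 1 - πf = b / p := by rw [hπf]; field_simp; linarith
  have key : 2 * Rf * c + πf * cDpf - (1 - πf) * cDmf = (2 * (c * a) + I1 - I2) / p := by
    rw [hq, hR, hπf, hcDpf, hcDmf]; field_simp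
  rw [key, le_div_iff₀ hp]
  nlinarith

/-- Proposition 2 (bounding costs of counterfactual multiplicity): under Assumption 1, the
expected cost of counterfactual explanations under classifier multiplicity is bounded by
`α·8^(1-γ)·[2·R_f·c^max_f + 2·R_g·c^max_g + π_f·c_{D⁺}(f) + π_g·c_{D⁺}(g)
  - (1-π_f)·c_{D⁻}(f) - (1-π_g)·c_{D⁻}(g) + Δ(f,g)]^γ`. -/
theorem cost_of_counterfactual_multiplicity {X : Type*} [MetricSpace X] [MeasurableSpace X]
    [BorelSpace X] (μ : Measure X) [IsProbabilityMeasure μ]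
    (f g : X → ℝ) (hf : Measurable f) (hg : Measurable g)
    (cmaxf cmaxg : ℝ) (hbf : ∀ x, |f x| ≤ cmaxf) (hbg : ∀ x, |g x| ≤ cmaxg)
    (Dp : Set X) (hDpm : MeasurableSet Dp)
    (hneg : ∀ᵐ x ∂μ, min (f x) (g x) ≤ 0)
    (h1 : 0 < μ {x | f x ≤ 0}) (h2 : 0 < μ {x | g x ≤ 0})
    (h3 : 0 < μ ({x | f x ≤ 0} ∩ Dp)) (h4 : 0 < μ ({x | f x ≤ 0} ∩ Dpᶜ))
    (h5 : 0 < μ ({x | g x ≤ 0} ∩ Dp)) (h6 : 0 < μ ({x | g x ≤ 0} ∩ Dpᶜ))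
    (α γ : ℝ) (hα : 0 < α) (hγ0 : 0 < γ) (hγ1 : γ ≤ 1)
    (hdist : ∀ x, infDist x ({y | 0 < f y} ∩ {y | 0 < g y}) ≤
      α * (max 0 (max (-f x) (-g x))) ^ γ)
    (πf πg cDpf cDmf cDpg cDmg Rf Rg Δ : ℝ)
    (hπf : πf = (μ (Dp ∩ {x | f x ≤ 0})).toReal / (μ {x | f x ≤ 0}).toReal)
    (hπg : πg = (μ (Dp ∩ {x | g x ≤ 0})).toReal / (μ {x | g x ≤ 0}).toReal)
    (hcDpf : cDpf =
      (∫ x in {x | f x ≤ 0} ∩ Dp, f x ∂μ) / (μ ({x | f x ≤ 0} ∩ Dp)).toReal)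
    (hcDmf : cDmf =
      (∫ x in {x | f x ≤ 0} ∩ Dpᶜ, f x ∂μ) / (μ ({x | f x ≤ 0} ∩ Dpᶜ)).toReal)
    (hcDpg : cDpg =
      (∫ x in {x | g x ≤ 0} ∩ Dp, g x ∂μ) / (μ ({x | g x ≤ 0} ∩ Dp)).toReal)
    (hcDmg : cDmg =
      (∫ x in {x | g x ≤ 0} ∩ Dpᶜ, g x ∂μ) / (μ ({x | g x ≤ 0} ∩ Dpᶜ)).toReal)
    (hRf : Rf = πf *
        ((μ ({x | f x ≤ 0} ∩ ({x | f x ≤ 0} ∩ Dp))).toReal / (μ ({x | f x ≤ 0} ∩ Dp)).toReal)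
      + (1 - πf) *
        ((μ ({x | 0 < f x} ∩ ({x | f x ≤ 0} ∩ Dpᶜ))).toReal / (μ ({x | f x ≤ 0} ∩ Dpᶜ)).toReal))
    (hRg : Rg = πg *
        ((μ ({x | g x ≤ 0} ∩ ({x | g x ≤ 0} ∩ Dp))).toReal / (μ ({x | g x ≤ 0} ∩ Dp)).toReal)
      + (1 - πg) *
        ((μ ({x | 0 < g x} ∩ ({x | g x ≤ 0} ∩ Dpᶜ))).toReal / (μ ({x | g x ≤ 0} ∩ Dpᶜ)).toReal))
    (hΔ : Δ = ∫ x, |f x - g x| ∂μ) :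
    ∫ x, infDist x ({y | 0 < f y} ∩ {y | 0 < g y}) ∂μ ≤
      α * 8 ^ (1 - γ) *
        (2 * Rf * cmaxf + 2 * Rg * cmaxg + πf * cDpf + πg * cDpg
          - (1 - πf) * cDmf - (1 - πg) * cDmg + Δ) ^ γ := by
  have hfi : Integrable f μ := Integrable.of_bound hf.aestronglyMeasurable cmaxf
    (Filter.Eventually.of_forall fun x => by simpa using hbf x)
  have hgi : Integrable g μ := Integrable.of_bound hg.aestronglyMeasurable cmaxg
    (Filter.Eventually.of_forall fun x => by simpa using hbg x)
  have Bf := aux_bound μ f hf cmaxf hbf Dp hDpm h1 h3 h4 πf cDpf cDmf Rf hπf hcDpf hcDmf hRf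
  have Bg := aux_bound μ g hg cmaxg hbg Dp hDpm h2 h5 h6 πg cDpg cDmg Rg hπg hcDpg hcDmg hRg
  have hΔ0 : 0 ≤ Δ := by rw [hΔ]; exact integral_nonneg fun x => abs_nonneg _
  have hfm : Integrable (fun x => max 0 (-f x)) μ := (integrable_zero _ _ _).sup hfi.neg
  have hgm : Integrable (fun x => max 0 (-g x)) μ := (integrable_zero _ _ _).sup hgi.neg
  have hM : Integrable (fun x => max 0 (max (-f x) (-g x))) μ :=
    (integrable_zero _ _ _).sup (hfi.neg.sup hgi.neg)
  have hM0 : ∀ x, 0 ≤ max 0 (max (-f x) (-g x)) := fun x => le_max_left _ _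
  have hMle : ∫ x, max 0 (max (-f x) (-g x)) ∂μ
      ≤ ∫ x, max 0 (-f x) ∂μ + ∫ x, max 0 (-g x) ∂μ := by
    rw [← integral_add hfm hgm]
    refine integral_mono hM (hfm.add hgm) fun x => ?_
    have a1 := le_max_left 0 (-f x)
    have a2 := le_max_right 0 (-f x)
    have a3 := le_max_left 0 (-g x)
    have a4 := le_max_right 0 (-g x)
    exact max_le (by linarith) (max_le (by linarith) (by linarith))
  have hMg : Integrable (fun x => (max 0 (max (-f x) (-g x))) ^ γ) μ := by
    refine Integrable.of_bound (C := (max 0 (max cmaxf cmaxg)) ^ γ)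
      ((measurable_const.max (hf.neg.max hg.neg)).pow_const γ).aestronglyMeasurable (Filter.Eventually.of_forall fun x => ?_)
    rw [Real.norm_eq_abs, abs_of_nonneg (Real.rpow_nonneg (hM0 x) _)]
    refine Real.rpow_le_rpow (hM0 x) ?_ hγ0.le
    have b1 := neg_le_of_abs_le (hbf x)
    have b2 := neg_le_of_abs_le (hbg x)
    exact max_le_max le_rfl (max_le_max (by linarith) (by linarith))
  have hJ : ∫ x, (max 0 (max (-f x) (-g x))) ^ γ ∂μ
      ≤ (∫ x, max 0 (max (-f x) (-g x)) ∂μ) ^ γ :=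
    (Real.concaveOn_rpow hγ0.le hγ1).le_map_integral
      (Real.continuous_rpow_const hγ0.le).continuousOn isClosed_Ici
      (Filter.Eventually.of_forall hM0) hM hMg
  have h8 : (1 : ℝ) ≤ 8 ^ (1 - γ) := Real.one_le_rpow (by norm_num) (by linarith)
  have hI0 : 0 ≤ ∫ x, max 0 (max (-f x) (-g x)) ∂μ := integral_nonneg hM0
  calc ∫ x, infDist x ({y | 0 < f y} ∩ {y | 0 < g y}) ∂μ
      ≤ ∫ x, α * (max 0 (max (-f x) (-g x))) ^ γ ∂μ :=
        integral_mono_of_nonneg (Filter.Eventually.of_forall fun x => infDist_nonneg)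
          (hMg.const_mul α) (Filter.Eventually.of_forall hdist)
    _ = α * ∫ x, (max 0 (max (-f x) (-g x))) ^ γ ∂μ := integral_const_mul _ _
    _ ≤ α * (∫ x, max 0 (max (-f x) (-g x)) ∂μ) ^ γ := by gcongr
    _ ≤ (α * 8 ^ (1 - γ)) * (∫ x, max 0 (max (-f x) (-g x)) ∂μ) ^ γ := by
        refine mul_le_mul_of_nonneg_right ?_ (Real.rpow_nonneg hI0 _)
        nlinarith
    _ ≤ _ := by
        refine mul_le_mul_of_nonneg_left ?_ (by positivity)
        refine Real.rpow_le_rpow hI0 ?_ hγ0.le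
        linarith
end
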